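/- arXiv:1601.07736 — 5 statements merged into one kernel-verified Lean document; each statement's English description precedes it below -/
import Mathlib

section
/- Let S be an n×n row-stochastic matrix (n ≥ 1), written in block form with (1,1)-entry s₁₁, first row (after the first entry) xᵀ = [s₁₂, s₁₃, …, s₁ₙ], first column (after the first entry) y, and lower-right (n−1)×(n−1) block S(1|1). Let P be the n×n matrix whose first column is the all-ones vector e and whose j-th column (j ≥ 2) is the standard basis vector eⱼ. Then P is invertible and P⁻¹SP equals the block upper-triangular matrix with (1,1)-block equal to 1, (1,2)-block equal to xᵀ, (2,1)-block equal to the zero vector of length n−1, and (2,2)-block equal to B = S(1|1) − j_{n−1} xᵀ, where j_{n−1} is the (n−1)×1 all-ones column vector. In particular, S is similar to this block matrix. -/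
/-!
Let `S v = r v` with `v k = 1`, and let `P` be the identity matrix with its `k`-th column replaced
by `v`. The `k`-th column of `S * P` is `r v = P (r eₖ)`, so the `k`-th column of `P⁻¹ * S * P` is
`r eₖ`. The other columns of `S * P` are those of `S`, and since `P = 1 + (v - eₖ) eₖᵀ`, we have
`P * S' = S` for `S' = S - (v - eₖ) (row k of S)`, which has the same `k`-th row as `S`.
A row-stochastic matrix is the case where `v` is the all-ones vector and `r = 1`.
-/

section

open Matrix

theorem updateCol_mul_eq_add_vecMulVec {l m n R : Type*} [Fintype m] [DecidableEq m]
    [NonUnitalNonAssocRing R] (A : Matrix l m R) (k : m) (v : l → R) (B : Matrix m n R) :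
    A.updateCol k v * B = A * B + vecMulVec (v - A.col k) (B k) := by
  have updateCol_eq_add : A.updateCol k v = A + (0 : Matrix l m R).updateCol k (v - A.col k) := by
    ext i j
    by_cases hj : j = k <;> simp [hj]
  have zero_updateCol_mul :
      (0 : Matrix l m R).updateCol k (v - A.col k) * B = vecMulVec (v - A.col k) (B k) := by
    ext i j
    simp [mul_apply, updateCol_apply, vecMulVec_apply]
  rw [updateCol_eq_add, Matrix.add_mul, zero_updateCol_mul]

variable {ι R : Type*} [Fintype ι] [DecidableEq ι] [CommRing R]

theorem det_one_updateCol (k : ι) (v : ι → R) : ((1 : Matrix ι ι R).updateCol k v).det = v k := by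
  rw [← cramer_apply, cramer_one, Module.End.one_apply]

theorem isUnit_one_updateCol_iff {k : ι} {v : ι → R} :
    IsUnit ((1 : Matrix ι ι R).updateCol k v) ↔ IsUnit (v k) := by
  rw [isUnit_iff_isUnit_det, det_one_updateCol]

theorem mul_one_updateCol_of_mulVec_eq_smul {S : Matrix ι ι R} {v : ι → R} {r : R} {k : ι}
    (hSv : S *ᵥ v = r • v) (hv : v k = 1) :
    S * (1 : Matrix ι ι R).updateCol k v =
      (1 : Matrix ι ι R).updateCol k v *
        (S - vecMulVec (v - Pi.single k 1) (S k)).updateCol k (Pi.single k r) := by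
  set P := (1 : Matrix ι ι R).updateCol k v
  set S' := S - vecMulVec (v - Pi.single k 1) (S k)
  have row_S' : S' k = S k := by
    ext j
    simp [S', vecMulVec_apply, hv]
  have col_one : (1 : Matrix ι ι R).col k = Pi.single k 1 := by
    ext i
    simp [one_apply, Pi.single_apply]
  have P_mul_S' : P * S' = S := by
    rw [updateCol_mul_eq_add_vecMulVec, Matrix.one_mul, row_S', col_one, sub_add_cancel]
  have P_mulVec_single : P *ᵥ Pi.single k r = r • v := by
    ext i
    simp [P, mul_comm]
  calc S * P = S.updateCol k (r • v) := by rw [mul_updateCol, Matrix.mul_one, hSv]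
    _ = P * S'.updateCol k (Pi.single k r) := by rw [mul_updateCol, P_mul_S', P_mulVec_single]

theorem stochastic_block_triangularization_general (k : ι) (S : Matrix ι ι R) (v : ι → R) (r : R)
    (hSv : S *ᵥ v = r • v) (hv : v k = 1)
    (P : Matrix ι ι R) (hP : ∀ i j, P i j = if j = k then v i else if i = j then 1 else 0)
    (T : Matrix ι ι R)
    (hT : ∀ i j, T i j =
      if i = k then (if j = k then r else S k j)
      else (if j = k then 0 else S i j - v i * S k j)) :
    IsUnit P ∧ P⁻¹ * S * P = T := by
  have P_eq : P = (1 : Matrix ι ι R).updateCol k v := by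
    ext i j
    simp only [hP, updateCol_apply, one_apply]
  have T_eq : T = (S - vecMulVec (v - Pi.single k 1) (S k)).updateCol k (Pi.single k r) := by
    ext i j
    by_cases hi : i = k <;> by_cases hj : j = k <;> simp [hT, vecMulVec_apply, hi, hj, hv]
  have P_isUnit : IsUnit P := by
    rw [P_eq, isUnit_one_updateCol_iff, hv]
    exact isUnit_one
  have intertwine : S * P = P * T := by
    rw [P_eq, T_eq, mul_one_updateCol_of_mulVec_eq_smul hSv hv]
  refine ⟨P_isUnit, ?_⟩
  rw [Matrix.mul_assoc, intertwine,
    nonsing_inv_mul_cancel_left _ _ ((isUnit_iff_isUnit_det P).mp P_isUnit)]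

end

/-- For an `(n+1)×(n+1)` row-stochastic matrix `S`, writing `P` for the
matrix whose first column is the all-ones vector and whose remaining columns are the
standard basis vectors, `P` is invertible and `P⁻¹ * S * P` is the block
upper-triangular matrix with `(1,1)`-block `1`, `(1,2)`-block the first row of `S`
(without its first entry), `(2,1)`-block zero, and `(2,2)`-block
`S(1|1) - j_{n} xᵀ` (entrywise: `S i j - S 0 j`). In particular `S` is similar
to this block matrix. -/
theorem stochastic_block_triangularization (n : ℕ)
    (S : Matrix (Fin (n + 1)) (Fin (n + 1)) ℝ)
    (hnonneg : ∀ i j, 0 ≤ S i j)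
    (hrow : ∀ i, ∑ j, S i j = 1)
    (P : Matrix (Fin (n + 1)) (Fin (n + 1)) ℝ)
    (hP : ∀ i j, P i j = if j = 0 then 1 else if i = j then 1 else 0)
    (T : Matrix (Fin (n + 1)) (Fin (n + 1)) ℝ)
    (hT : ∀ i j, T i j =
      if i = 0 then (if j = 0 then 1 else S 0 j)
      else (if j = 0 then 0 else S i j - S 0 j)) :
    IsUnit P ∧ P⁻¹ * S * P = T := by
  have row_sums : S.mulVec 1 = (1 : ℝ) • 1 := by
    simp [funext_iff, Matrix.mulVec, dotProduct_one, hrow]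
  exact stochastic_block_triangularization_general 0 S 1 1 row_sums rfl P hP T (by simpa using hT)
end

section
/- Let S = [s_{ij}] be an n×n row-stochastic matrix. Fix k ∈ {1, 2, …, n} and define the (n−1)×(n−1) matrix S(k) = S(k|k) − j_{n−1} s(k)ᵀ, where s(k)ᵀ = [s_{k1}, …, s_{k,k−1}, s_{k,k+1}, …, s_{kn}] is the k-th row of S with its k-th entry deleted. Then every eigenvalue of S other than 1 is an eigenvalue of S(k). -/
/-!
Let `S v = μ v` with `μ ≠ 1`. Since `S 1 = 1`, the vector `w = v - v k • 1` is nonzero and satisfies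
`S w = μ w + c 1` for a scalar `c`, and `w k = 0` forces `c = (S w) k`. Subtracting row `k` of `S`
from every row removes exactly this error, and because `w k = 0` the resulting eigenvalue equation
survives the deletion of the `k`-th row and column. The same argument works with any eigenvector `u`
with `u k = 1` in place of `1`; this is Wielandt's deflation.
-/

open Matrix Function

variable {R ι κ : Type*}

section Restriction

variable [NonUnitalNonAssocSemiring R] [Fintype ι] [Fintype κ]

theorem submatrix_mulVec_comp_of_support_subset_range {m l : Type*} (M : Matrix m ι R) (f : l → m)
    {e : κ → ι} (he : Injective e) {w : ι → R} (hw : support w ⊆ Set.range e) :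
    M.submatrix f e *ᵥ (w ∘ e) = (M *ᵥ w) ∘ f := by
  funext i
  refine Fintype.sum_of_injective e he _ _ (fun j hj => ?_) fun _ => rfl
  rw [notMem_support.mp fun h => hj (hw h), mul_zero]

end Restriction

theorem comp_ne_zero_of_support_subset_range [Zero R] {e : κ → ι} {w : ι → R}
    (hw : support w ⊆ Set.range e) (hw0 : w ≠ 0) : w ∘ e ≠ 0 := by
  obtain ⟨i, hi⟩ := ne_iff.mp hw0
  obtain ⟨a, rfl⟩ := hw hi
  exact ne_iff.mpr ⟨a, hi⟩

theorem support_sub_smul_subset_compl_singleton [NonAssocRing R] {u : ι → R} {k : ι} (v : ι → R)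
    (huk : u k = 1) : support (v - v k • u) ⊆ {k}ᶜ := by
  rintro i hi rfl
  exact hi (by simp [huk])

section Deflation

variable [CommRing R] [Fintype ι] {A : Matrix ι ι R} {u v : ι → R} {r μ : R} {k : ι}

theorem ne_smul_of_eigenvalue_ne [NoZeroDivisors R] (hu : A *ᵥ u = r • u) (hv : A *ᵥ v = μ • v)
    (hv0 : v ≠ 0) (hμ : μ ≠ r) (c : R) : v ≠ c • u := by
  intro hvu
  have hv' : A *ᵥ v = r • v := by rw [hvu, mulVec_smul, hu, smul_comm]
  have hzero : (μ - r) • v = 0 := by rw [sub_smul, ← hv, hv', sub_self]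
  exact (smul_eq_zero.mp hzero).elim (sub_ne_zero.mpr hμ) hv0

/-- Wielandt's deflation of `A` by a vector `u`, meant for an eigenvector of `A` with `u k = 1`.
For `u = 1` its principal submatrix off `k` is the matrix `S(k)` attached to `A = S`. -/
def wielandtDeflation (A : Matrix ι ι R) (u : ι → R) (k : ι) : Matrix ι ι R :=
  A - vecMulVec u (A k)

theorem wielandtDeflation_mulVec (A : Matrix ι ι R) (u : ι → R) (k : ι) (v : ι → R) :
    wielandtDeflation A u k *ᵥ v = A *ᵥ v - (A *ᵥ v) k • u := by
  rw [wielandtDeflation, sub_mulVec, vecMulVec_mulVec, op_smul_eq_smul]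
  rfl

theorem wielandtDeflation_mulVec_sub_smul (hu : A *ᵥ u = r • u) (huk : u k = 1)
    (hv : A *ᵥ v = μ • v) :
    wielandtDeflation A u k *ᵥ (v - v k • u) = μ • (v - v k • u) := by
  rw [wielandtDeflation_mulVec, mulVec_sub, mulVec_smul, hu, hv]
  funext i
  simp only [Pi.sub_apply, Pi.smul_apply, smul_eq_mul, huk]
  ring

theorem eigenvalue_of_deleted_matrix_general [NoZeroDivisors R] [Fintype κ]
    (hu : A *ᵥ u = r • u) (huk : u k = 1) {e : κ → ι} (he : Injective e)
    (hek : {k}ᶜ ⊆ Set.range e) (hμ : μ ≠ r) (hev : ∃ v, v ≠ 0 ∧ A *ᵥ v = μ • v) :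
    ∃ w, w ≠ 0 ∧ (wielandtDeflation A u k).submatrix e e *ᵥ w = μ • w := by
  obtain ⟨v, hv0, hv⟩ := hev
  have hsupp : support (v - v k • u) ⊆ Set.range e :=
    (support_sub_smul_subset_compl_singleton v huk).trans hek
  have hne : v - v k • u ≠ 0 := sub_ne_zero.mpr (ne_smul_of_eigenvalue_ne hu hv hv0 hμ (v k))
  refine ⟨(v - v k • u) ∘ e, comp_ne_zero_of_support_subset_range hsupp hne, ?_⟩
  rw [submatrix_mulVec_comp_of_support_subset_range _ e he hsupp,
    wielandtDeflation_mulVec_sub_smul hu huk hv]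
  rfl

end Deflation

/-- Let `S` be an `(n+1)×(n+1)` row-stochastic matrix and fix an index `k`.
Define the `n×n` matrix `S(k) = S(k|k) - j_n s(k)ᵀ`, i.e. entrywise
`Sk a b = S (k.succAbove a) (k.succAbove b) - S k (k.succAbove b)`, where
`S(k|k)` is the principal submatrix deleting row and column `k` and `s(k)ᵀ` is the
`k`-th row of `S` with its `k`-th entry deleted. Then every complex eigenvalue of `S`
other than `1` is an eigenvalue of `S(k)`. -/
theorem eigenvalue_of_deleted_matrix (n : ℕ)
    (S : Matrix (Fin (n + 1)) (Fin (n + 1)) ℝ)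
    (hnonneg : ∀ i j, 0 ≤ S i j)
    (hrow : ∀ i, ∑ j, S i j = 1)
    (k : Fin (n + 1))
    (Sk : Matrix (Fin n) (Fin n) ℝ)
    (hSk : ∀ a b, Sk a b = S (k.succAbove a) (k.succAbove b) - S k (k.succAbove b))
    (μ : ℂ) (hμ : μ ≠ 1)
    (hev : ∃ v : Fin (n + 1) → ℂ, v ≠ 0 ∧
      (S.map (fun x => (x : ℂ))).mulVec v = μ • v) :
    ∃ w : Fin n → ℂ, w ≠ 0 ∧ (Sk.map (fun x => (x : ℂ))).mulVec w = μ • w := by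
  have hone : S.map (fun x => (x : ℂ)) *ᵥ 1 = (1 : ℂ) • 1 := by
    funext i
    simpa [mulVec, dotProduct] using congrArg ((↑) : ℝ → ℂ) (hrow i)
  have hdel : Sk.map (fun x => (x : ℂ)) =
      (wielandtDeflation (S.map fun x => (x : ℂ)) 1 k).submatrix k.succAbove k.succAbove := by
    ext a b
    simp [wielandtDeflation, hSk]
  rw [hdel]
  exact eigenvalue_of_deleted_matrix_general hone rfl k.succAbove_right_injective
    k.range_succAbove.ge hμ hev
end

section
/- Let Γ be a simple undirected connected graph on n ≥ 2 vertices with Randić transition matrix 𝓡 = D⁻¹A. Then every real eigenvalue λ of 𝓡 satisfies λ ≥ −1 + min_{i∼j} N(i,j)/max{d_i, d_j}, where the minimum is taken over all pairs of adjacent vertices i, j. (Equivalently, if ρ_n denotes the eigenvalue of largest modulus among the negative Randić eigenvalues of Γ, then |ρ_n| ≤ 1 − min_{i∼j} N(i,j)/max{d_i, d_j}.) -/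
/-!
Since each of the ratios is at most one, only `lam < 0` matters. Let `v` be an eigenvector for `lam`
with a positive entry, `i` a vertex where `v` is largest and `j` a neighbour of `i` where `v` is
smallest; then `v j < 0 < v i`. In `(R v) j - (R v) i` the common part of the rows `i` and `j`
cancels. What remains of each row has mass at most `1 - m`, where `m` is the sum of the entrywise
minima of the two rows, so `-lam * (v i - v j) ≤ (1 - m) * (v i - v j)`. For the Randić matrix,
`m = N(i,j) / max {d_i, d_j}`.
-/

open Finset Matrix

section Overlap

variable {ι K : Type*} [Fintype ι] [CommRing K] [LinearOrder K]

/-- The common mass `∑ k, min (P i k) (P j k)` of the rows `i` and `j` of `P`. For a row-stochastic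
`P` it is one minus the total variation distance of the two rows; it is used to bound the negative
eigenvalues of `P`. -/
def rowOverlap (P : Matrix ι ι K) (i j : ι) : K := ∑ k, min (P i k) (P j k)

variable [IsStrictOrderedRing K]

theorem rowOverlap_le_one {P : Matrix ι ι K} {i : ι} (hP : ∑ k, P i k ≤ 1) (j : ι) :
    rowOverlap P i j ≤ 1 :=
  (sum_le_sum fun _ _ => min_le_left _ _).trans hP

theorem dotProduct_sub_dotProduct_le_one_sub_sum_min_mul {p q v : ι → K} {a b : K}
    (hq : ∀ k, 0 ≤ q k) (hp_sum : ∑ k, p k ≤ 1) (hq_sum : ∑ k, q k ≤ 1) (ha : a ≤ 0) (hb : 0 ≤ b)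
    (hav : ∀ k, 0 < p k → a ≤ v k) (hvb : ∀ k, v k ≤ b) :
    q ⬝ᵥ v - p ⬝ᵥ v ≤ (1 - ∑ k, min (p k) (q k)) * (b - a) := by
  have lower (k : ι) : (p k - min (p k) (q k)) * a ≤ (p k - min (p k) (q k)) * v k := by
    rcases le_or_gt (p k) (q k) with hpq | hqp
    · simp [hpq]
    · exact mul_le_mul_of_nonneg_left (hav k ((hq k).trans_lt hqp))
        (sub_nonneg.2 (min_le_left _ _))
  have upper (k : ι) : (q k - min (p k) (q k)) * v k ≤ (q k - min (p k) (q k)) * b :=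
    mul_le_mul_of_nonneg_left (hvb k) (sub_nonneg.2 (min_le_right _ _))
  calc
    q ⬝ᵥ v - p ⬝ᵥ v
        = ∑ k, (q k - min (p k) (q k)) * v k - ∑ k, (p k - min (p k) (q k)) * v k := by
      simp only [dotProduct, ← sum_sub_distrib]
      exact sum_congr rfl fun k _ => by ring
    _ ≤ ∑ k, (q k - min (p k) (q k)) * b - ∑ k, (p k - min (p k) (q k)) * a :=
      sub_le_sub (sum_le_sum fun k _ => upper k) (sum_le_sum fun k _ => lower k)
    _ = (∑ k, q k - ∑ k, min (p k) (q k)) * b - (∑ k, p k - ∑ k, min (p k) (q k)) * a := by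
      simp only [← sum_mul, sum_sub_distrib]
    _ ≤ (1 - ∑ k, min (p k) (q k)) * b - (1 - ∑ k, min (p k) (q k)) * a :=
      sub_le_sub (mul_le_mul_of_nonneg_right (sub_le_sub_right hq_sum _) hb)
        (mul_le_mul_of_nonpos_right (sub_le_sub_right hp_sum _) ha)
    _ = (1 - ∑ k, min (p k) (q k)) * (b - a) := (mul_sub _ _ _).symm

theorem exists_rowOverlap_le_one_add_of_neg {P : Matrix ι ι K} (hP : ∀ i j, 0 ≤ P i j)
    (hP_sum : ∀ i, ∑ k, P i k ≤ 1) {lam : K} (hlam : lam < 0) {v : ι → K}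
    (hev : P *ᵥ v = lam • v) {x : ι} (hx : 0 < v x) :
    ∃ i j, 0 < P i j ∧ rowOverlap P i j ≤ 1 + lam := by
  have row (i : ι) : P i ⬝ᵥ v = lam * v i := congrFun hev i
  obtain ⟨i, -, hi⟩ := exists_max_image univ v ⟨x, mem_univ x⟩
  have hvi : 0 < v i := hx.trans_le (hi x (mem_univ x))
  obtain ⟨k, hPk, hvk⟩ : ∃ k, 0 < P i k ∧ v k < 0 := by
    by_contra! hnonneg
    have : 0 ≤ P i ⬝ᵥ v := sum_nonneg fun k _ =>
      (hP i k).eq_or_lt.elim (fun h => by simp [← h]) fun h => mul_nonneg h.le (hnonneg k h)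
    exact this.not_gt (row i ▸ mul_neg_of_neg_of_pos hlam hvi)
  obtain ⟨j, hj, hj_min⟩ := exists_min_image {k | 0 < P i k} v ⟨k, by simpa using hPk⟩
  simp only [mem_filter_univ] at hj hj_min
  have hvj : v j < 0 := (hj_min k hPk).trans_lt hvk
  have contraction : -lam * (v i - v j) ≤ (1 - rowOverlap P i j) * (v i - v j) := by
    calc
      -lam * (v i - v j) = P j ⬝ᵥ v - P i ⬝ᵥ v := by rw [row, row]; ring
      _ ≤ (1 - rowOverlap P i j) * (v i - v j) :=
        dotProduct_sub_dotProduct_le_one_sub_sum_min_mul (hP j) (hP_sum i) (hP_sum j) hvj.le hvi.le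
          hj_min fun k => hi k (mem_univ k)
  have hlam_le : -lam ≤ 1 - rowOverlap P i j :=
    le_of_mul_le_mul_right contraction (sub_pos.2 (hvj.trans hvi))
  exact ⟨i, j, hj, by linarith⟩

theorem exists_rowOverlap_le_one_add {P : Matrix ι ι K} (hP : ∀ i j, 0 ≤ P i j)
    (hP_sum : ∀ i, ∑ k, P i k ≤ 1) (hP_pos : ∃ i j, 0 < P i j) {lam : K} {v : ι → K}
    (hv : v ≠ 0) (hev : P *ᵥ v = lam • v) :
    ∃ i j, 0 < P i j ∧ rowOverlap P i j ≤ 1 + lam := by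
  rcases le_or_gt 0 lam with hlam | hlam
  · obtain ⟨i, j, hij⟩ := hP_pos
    exact ⟨i, j, hij, (rowOverlap_le_one (hP_sum i) j).trans (le_add_of_nonneg_right hlam)⟩
  · obtain ⟨x, hx⟩ := Function.ne_iff.1 hv
    rcases lt_or_gt_of_ne hx with hneg | hpos
    · exact exists_rowOverlap_le_one_add_of_neg hP hP_sum hlam (v := -v)
        (by rw [mulVec_neg, hev, smul_neg]) (neg_pos.2 hneg)
    · exact exists_rowOverlap_le_one_add_of_neg hP hP_sum hlam hev hpos

end Overlap

theorem min_one_div_one_div {K : Type*} [Semifield K] [LinearOrder K] [IsStrictOrderedRing K]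
    {a b : K} (ha : 0 < a) (hb : 0 < b) : min (1 / a) (1 / b) = 1 / max a b := by
  rcases le_total a b with hab | hba
  · rw [max_eq_right hab, min_eq_right (one_div_le_one_div_of_le ha hab)]
  · rw [max_eq_left hba, min_eq_left (one_div_le_one_div_of_le hb hba)]

section Randic

variable {V : Type*} [Fintype V] (K : Type*) [Field K] (G : SimpleGraph V) [DecidableRel G.Adj]

/-- The Randić transition matrix `D⁻¹A` of `G`, the transition matrix of the simple random walk.
It is given entrywise, so that the row of an isolated vertex is zero. -/
def randicTransitionMatrix : Matrix V V K :=
  of fun i j => if G.Adj i j then 1 / (G.degree i : K) else 0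

variable [LinearOrder K] [IsStrictOrderedRing K]

theorem randicTransitionMatrix_nonneg (i j : V) : 0 ≤ randicTransitionMatrix K G i j := by
  rw [randicTransitionMatrix, of_apply]
  positivity

theorem randicTransitionMatrix_pos_iff {i j : V} :
    0 < randicTransitionMatrix K G i j ↔ G.Adj i j := by
  rw [randicTransitionMatrix, of_apply]
  split_ifs with hij
  · have : 0 < G.degree i := (G.degree_pos_iff_exists_adj i).2 ⟨j, hij⟩
    exact iff_of_true (by positivity) hij
  · exact iff_of_false (lt_irrefl 0) hij

theorem sum_randicTransitionMatrix_le_one (i : V) :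
    ∑ k, randicTransitionMatrix K G i k ≤ 1 := by
  calc
    ∑ k, randicTransitionMatrix K G i k = (G.degree i : K) / G.degree i := by
      simp [randicTransitionMatrix, ← sum_filter, ← SimpleGraph.neighborFinset_eq_filter,
        div_eq_mul_inv]
    _ ≤ 1 := div_self_le_one _

theorem rowOverlap_randicTransitionMatrix [DecidableEq V] (i j : V) :
    rowOverlap (randicTransitionMatrix K G) i j =
      (#(G.neighborFinset i ∩ G.neighborFinset j) : K) /
        max (G.degree i : K) (G.degree j : K) := by
  have entry (k : V) :
      min (randicTransitionMatrix K G i k) (randicTransitionMatrix K G j k) =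
        if k ∈ G.neighborFinset i ∩ G.neighborFinset j then
          1 / max (G.degree i : K) (G.degree j : K) else 0 := by
    by_cases hik : G.Adj i k <;> by_cases hjk : G.Adj j k
    · have hi : 0 < G.degree i := (G.degree_pos_iff_exists_adj i).2 ⟨k, hik⟩
      have hj : 0 < G.degree j := (G.degree_pos_iff_exists_adj j).2 ⟨k, hjk⟩
      simpa [randicTransitionMatrix, hik, hjk] using
        min_one_div_one_div (Nat.cast_pos.2 hi : (0 : K) < _) (Nat.cast_pos.2 hj)
    all_goals simp [randicTransitionMatrix, hik, hjk]
  rw [rowOverlap, sum_congr rfl fun k _ => entry k, sum_ite_mem, univ_inter, sum_const,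
    nsmul_eq_mul, mul_one_div]

end Randic

theorem randic_rojo_soto_bound_general {V : Type*} [Fintype V] [DecidableEq V]
    (G : SimpleGraph V) [DecidableRel G.Adj] (hG : G ≠ ⊥) {lam : ℝ}
    (hev : ∃ v : V → ℝ, v ≠ 0 ∧ randicTransitionMatrix ℝ G *ᵥ v = lam • v) :
    lam ≥ -1 + ⨅ p : {p : V × V // G.Adj p.1 p.2},
      ((G.neighborFinset p.1.1 ∩ G.neighborFinset p.1.2).card : ℝ) /
        max (G.degree p.1.1 : ℝ) (G.degree p.1.2 : ℝ) := by
  obtain ⟨v, hv, hRv⟩ := hev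
  obtain ⟨i, j, hij, hoverlap⟩ := exists_rowOverlap_le_one_add
    (randicTransitionMatrix_nonneg ℝ G) (sum_randicTransitionMatrix_le_one ℝ G)
    (by simpa only [randicTransitionMatrix_pos_iff] using SimpleGraph.ne_bot_iff_exists_adj.1 hG)
    hv hRv
  simp only [← rowOverlap_randicTransitionMatrix]
  have hinf := ciInf_le (f := fun p : {p : V × V // G.Adj p.1 p.2} =>
    rowOverlap (randicTransitionMatrix ℝ G) p.1.1 p.1.2) (Set.finite_range _).bddBelow
    ⟨(i, j), (randicTransitionMatrix_pos_iff ℝ G).1 hij⟩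
  linarith

/-- Rojo–Soto bound: For a simple connected graph `Γ` on `n ≥ 2` vertices
with Randić transition matrix `𝓡 = D⁻¹A` (entries `1/d_i` if `i ∼ j`, else `0`),
every real eigenvalue `λ` of `𝓡` satisfies
`λ ≥ -1 + min_{i∼j} N(i,j)/max{d_i, d_j}`, the minimum being over adjacent pairs. -/
theorem randic_rojo_soto_bound (n : ℕ) (hn : 2 ≤ n)
    (G : SimpleGraph (Fin n)) [DecidableRel G.Adj]
    (hconn : G.Connected)
    (R : Matrix (Fin n) (Fin n) ℝ)
    (hR : ∀ i j, R i j = if G.Adj i j then 1 / (G.degree i : ℝ) else 0)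
    (lam : ℝ)
    (hev : ∃ v : Fin n → ℝ, v ≠ 0 ∧ R.mulVec v = lam • v) :
    lam ≥ -1 + ⨅ p : {p : Fin n × Fin n // G.Adj p.1 p.2},
      ((G.neighborFinset p.1.1 ∩ G.neighborFinset p.1.2).card : ℝ) /
        max (G.degree p.1.1 : ℝ) (G.degree p.1.2 : ℝ) := by
  have : Nontrivial (Fin n) := Fin.nontrivial_iff_two_le.2 hn
  exact randic_rojo_soto_bound_general G (fun hG => SimpleGraph.not_connected_bot (hG ▸ hconn))
    ((Matrix.ext hR : R = randicTransitionMatrix ℝ G) ▸ hev)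
end

section
/- Let Γ be a simple connected graph of order n ≥ 2, and let λ₁ = 1 ≥ λ₂ ≥ … ≥ λₙ be the eigenvalues of its Randić transition matrix 𝓡 = D⁻¹A. For vertices i ≠ k define α_{ik} = 1/d_k + 2N(i,k)/max{d_i, d_k} if k ∼ i, and α_{ik} = 2N(i,k)/max{d_i, d_k} if k ≁ i; and define β_{ik} = 1/d_k + 2/d_i + 2N(i,k)/max{d_i, d_k} if k ∼ i, and β_{ik} = 2N(i,k)/max{d_i, d_k} if k ≁ i. Then −2 + max_i { min{ min_{k ≠ i} α_{ik}, 1 } } ≤ λₙ and λ₂ ≤ 2 − max_i { min{ min_{k ≠ i} β_{ik}, 1 } }, i.e., every eigenvalue λ ≠ 1 of 𝓡 satisfies −2 + max_{i}{min_{k≠i}{α_{ik}},1} ≤ λ ≤ 2 − max_{i}{min_{k≠i}{β_{ik}},1}. -/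
/-!
Let `v` be a non-constant eigenvector of a matrix `M` with constant row sums, and fix an index `i`.
The numbers `v k - v i`, `k ≠ i`, form an eigenvector, for the same eigenvalue, of the matrix with
entries `M k j - M i j`, `k, j ≠ i`, to which Gershgorin's circle theorem applies. Since
`|a - b| = a + b - 2 min a b`, the Gershgorin radii measure the overlap of the rows `k` and `i`,
which for `M = D⁻¹A` is `N(i, k) / max {d_i, d_k}`.
-/

open Finset Matrix Module.End

theorem exists_ne_of_mulVec_eq_smul {ι K : Type*} [Fintype ι] [Semiring K] [IsRightCancelMulZero K]
    {M : Matrix ι ι K} {s lam : K} {v : ι → K} (hM : ∀ k, ∑ j, M k j = s)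
    (hlam : lam ≠ s) (hv0 : v ≠ 0) (hv : M *ᵥ v = lam • v) : ∃ k l, v k ≠ v l := by
  by_contra! hconst
  obtain ⟨i, hi⟩ := Function.ne_iff.mp hv0
  have hmul : s * v i = lam * v i := by
    simpa [mulVec, dotProduct, hconst _ i, ← sum_mul, hM] using congrFun hv i
  exact hlam (mul_right_cancel₀ hi hmul).symm

section Deflation

variable {ι K : Type*} [DecidableEq ι]

/-- The deflation of `M` at `i`: row `i` is subtracted from every row, and the index `i` is removed.
If `M` has constant row sums, this discards the eigenvector of constants and keeps the others. -/
def rowDeflation [Sub K] (M : Matrix ι ι K) (i : ι) : Matrix {k // k ≠ i} {k // k ≠ i} K :=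
  .of fun k j ↦ M k j - M i j

variable [Fintype ι] {s lam : K}

theorem rowDeflation_mulVec_sub [NonUnitalNonAssocRing K] {M : Matrix ι ι K}
    (hM : ∀ k, ∑ j, M k j = s) (v : ι → K) (i : ι) :
    rowDeflation M i *ᵥ (fun k ↦ v k - v i) = fun k : {k // k ≠ i} ↦ (M *ᵥ v) k - (M *ᵥ v) i := by
  ext k
  have hsub : ∑ j, (M k j - M i j) * (v j - v i) = (M *ᵥ v) k - (M *ᵥ v) i := by
    simp [mulVec, dotProduct, mul_sub, sub_mul, sum_sub_distrib, ← sum_mul, hM]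
  rw [← hsub, Fintype.sum_eq_add_sum_subtype_ne _ i, sub_self (v i), mul_zero, zero_add]
  rfl

theorem hasEigenvector_rowDeflation [CommRing K] {M : Matrix ι ι K} {v : ι → K}
    (hM : ∀ k, ∑ j, M k j = s) (hv : M *ᵥ v = lam • v) (hconst : ∃ k l, v k ≠ v l) (i : ι) :
    HasEigenvector (toLin' (rowDeflation M i)) lam (fun k ↦ v k - v i) := by
  refine hasEigenvector_iff.mpr ⟨mem_eigenspace_iff.mpr ?_, fun hzero ↦ ?_⟩
  · rw [toLin'_apply, rowDeflation_mulVec_sub hM, hv]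
    ext k
    simp [mul_sub]
  · have heq (k : ι) : v k = v i := by
      by_cases hki : k = i
      · rw [hki]
      · exact sub_eq_zero.mp (congrFun hzero ⟨k, hki⟩)
    obtain ⟨k, l, hkl⟩ := hconst
    exact hkl ((heq k).trans (heq l).symm)

theorem exists_norm_sub_le_sum_compl_pair [NormedField K] {M : Matrix ι ι K} {v : ι → K}
    (hM : ∀ k, ∑ j, M k j = s) (hv : M *ᵥ v = lam • v) (hconst : ∃ k l, v k ≠ v l) (i : ι) :
    ∃ k ≠ i, ‖lam - (M k k - M i k)‖ ≤ ∑ j ∈ {k, i}ᶜ, ‖M k j - M i j‖ := by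
  obtain ⟨⟨k, hki⟩, hk⟩ := eigenvalue_mem_ball <|
    hasEigenvalue_of_hasEigenvector (hasEigenvector_rowDeflation hM hv hconst i)
  refine ⟨k, hki, (mem_closedBall_iff_norm.mp hk).trans_eq ?_⟩
  have hcompl : ({k, i}ᶜ : Finset ι) =
      (univ.erase (⟨k, hki⟩ : {j // j ≠ i})).map (Function.Embedding.subtype _) := by
    ext j
    simp [and_comm]
  rw [hcompl, sum_map]
  rfl

end Deflation

theorem sum_abs_sub_eq_add_sub_two_mul_sum_min {ι K : Type*} [CommRing K] [LinearOrder K]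
    [IsStrictOrderedRing K] (s : Finset ι) (f g : ι → K) :
    ∑ j ∈ s, |f j - g j| = ∑ j ∈ s, f j + ∑ j ∈ s, g j - 2 * ∑ j ∈ s, min (f j) (g j) := by
  rw [mul_sum, ← sum_add_distrib, ← sum_sub_distrib]
  refine sum_congr rfl fun j _ ↦ ?_
  linarith [max_sub_min_eq_abs' (f j) (g j), min_add_max (f j) (g j)]

theorem exists_abs_sub_le_sub_sum_min {ι : Type*} [Fintype ι]
    {M : Matrix ι ι ℝ} {s lam : ℝ} {v : ι → ℝ} (hM : ∀ k, ∑ j, M k j = s)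
    (hv : M *ᵥ v = lam • v) (hconst : ∃ k l, v k ≠ v l) (i : ι) :
    ∃ k ≠ i, |lam - (M k k - M i k)| ≤
      2 * s - 2 * ∑ j, min (M k j) (M i j) - |M k k - M i k| - |M k i - M i i| := by
  classical
  obtain ⟨k, hki, hk⟩ := exists_norm_sub_le_sum_compl_pair hM hv hconst i
  have hsum := sum_abs_sub_eq_add_sub_two_mul_sum_min univ (M k) (M i)
  rw [← sum_add_sum_compl {k, i}, sum_pair hki, hM, hM] at hsum
  simp only [Real.norm_eq_abs] at hk
  exact ⟨k, hki, by linarith⟩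

section TransitionMatrix

variable {V : Type*} (G : SimpleGraph V) [Fintype V] [DecidableRel G.Adj]

/-- The Randić transition matrix `D⁻¹A` of `G`, that is, the transition matrix of the simple random
walk. The row of an isolated vertex is `0`. -/
noncomputable def transitionMatrix : Matrix V V ℝ :=
  .of fun i j ↦ if G.Adj i j then 1 / (G.degree i : ℝ) else 0

theorem transitionMatrix_apply (i j : V) :
    transitionMatrix G i j = if G.Adj i j then 1 / (G.degree i : ℝ) else 0 :=
  rfl

theorem transitionMatrix_nonneg (i j : V) : 0 ≤ transitionMatrix G i j := by
  rw [transitionMatrix_apply]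
  positivity

variable {G}

theorem sum_transitionMatrix {i : V} (hi : 0 < G.degree i) :
    ∑ j, transitionMatrix G i j = 1 := by
  simp [transitionMatrix_apply, ← sum_filter, ← G.neighborFinset_eq_filter, hi.ne']

theorem sum_min_transitionMatrix [DecidableEq V] {i k : V} (hi : 0 < G.degree i)
    (hk : 0 < G.degree k) :
    ∑ j, min (transitionMatrix G k j) (transitionMatrix G i j) =
      #(G.neighborFinset i ∩ G.neighborFinset k) / max (G.degree i : ℝ) (G.degree k) := by
  have hmin (j : V) : min (transitionMatrix G k j) (transitionMatrix G i j) =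
      if j ∈ G.neighborFinset i ∩ G.neighborFinset k then
        (max (G.degree i : ℝ) (G.degree k))⁻¹ else 0 := by
    have hinv : min (G.degree k : ℝ)⁻¹ (G.degree i : ℝ)⁻¹ =
        (max (G.degree i : ℝ) (G.degree k))⁻¹ := by
      rcases le_total (G.degree i : ℝ) (G.degree k) with h | h
      · rw [max_eq_right h, min_eq_left (inv_anti₀ (mod_cast hi) h)]
      · rw [max_eq_left h, min_eq_right (inv_anti₀ (mod_cast hk) h)]
    by_cases hij : G.Adj i j <;> by_cases hkj : G.Adj k j <;>
      simp [transitionMatrix_apply, hij, hkj, hinv]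
  simp only [hmin, sum_ite_mem, univ_inter, sum_const, nsmul_eq_mul, div_eq_mul_inv]

theorem exists_abs_add_transitionMatrix_le [DecidableEq V] (hdeg : ∀ i, 0 < G.degree i) {lam : ℝ}
    {v : V → ℝ} (hv : transitionMatrix G *ᵥ v = lam • v) (hconst : ∃ k l, v k ≠ v l) (i : V) :
    ∃ k ≠ i, |lam + transitionMatrix G i k| ≤
      2 - 2 * #(G.neighborFinset i ∩ G.neighborFinset k) / max (G.degree i : ℝ) (G.degree k) -
        transitionMatrix G i k - transitionMatrix G k i := by
  obtain ⟨k, hki, hk⟩ :=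
    exists_abs_sub_le_sub_sum_min (fun k ↦ sum_transitionMatrix (hdeg k)) hv hconst i
  have hdiag (j : V) : transitionMatrix G j j = 0 := by simp [transitionMatrix_apply]
  refine ⟨k, hki, ?_⟩
  simpa [hdiag, sum_min_transitionMatrix (hdeg i) (hdeg k), mul_div_assoc,
    abs_of_nonneg (transitionMatrix_nonneg G _ _)] using hk

end TransitionMatrix

theorem ciSup_min_ciInf_le {ι L : Type*} {κ : ι → Type*} [Nonempty ι] [∀ i, Finite (κ i)]
    [ConditionallyCompleteLinearOrder L] {f : ∀ i, κ i → L} {b c : L}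
    (h : ∀ i, ∃ k, f i k ≤ c) : ⨆ i, min (⨅ k, f i k) b ≤ c := by
  refine ciSup_le fun i ↦ ?_
  obtain ⟨k, hk⟩ := h i
  exact (min_le_left _ _).trans ((ciInf_le (Set.finite_range _).bddBelow k).trans hk)

theorem randic_eigenvalue_bounds_general {V : Type*} [Fintype V] [DecidableEq V]
    (G : SimpleGraph V) [DecidableRel G.Adj] (hdeg : ∀ i, 0 < G.degree i) (α β : V → V → ℝ)
    (hα : ∀ i k, k ≠ i → α i k =
      (if G.Adj i k then 1 / (G.degree k : ℝ) else 0) +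
        2 * #(G.neighborFinset i ∩ G.neighborFinset k) / max (G.degree i : ℝ) (G.degree k))
    (hβ : ∀ i k, k ≠ i → β i k =
      (if G.Adj i k then 1 / (G.degree k : ℝ) + 2 / (G.degree i : ℝ) else 0) +
        2 * #(G.neighborFinset i ∩ G.neighborFinset k) / max (G.degree i : ℝ) (G.degree k))
    {lam : ℝ} {v : V → ℝ} (hv : transitionMatrix G *ᵥ v = lam • v)
    (hconst : ∃ k l, v k ≠ v l) :
    -2 + (⨆ i, min (⨅ k : {k // k ≠ i}, α i k) 1) ≤ lam ∧
      lam ≤ 2 - (⨆ i, min (⨅ k : {k // k ≠ i}, β i k) 1) := by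
  have hrow (i : V) : ∃ k : {k // k ≠ i}, α i k ≤ lam + 2 ∧ β i k ≤ 2 - lam := by
    obtain ⟨k, hki, hk⟩ := exists_abs_add_transitionMatrix_le hdeg hv hconst i
    refine ⟨⟨k, hki⟩, ?_⟩
    have hαk : α i k = transitionMatrix G k i + 2 * #(G.neighborFinset i ∩ G.neighborFinset k) /
        max (G.degree i : ℝ) (G.degree k) := by
      simp only [hα i k hki, transitionMatrix_apply, G.adj_comm k i]
    have hβk : β i k = α i k + 2 * transitionMatrix G i k := by
      rw [hα i k hki, hβ i k hki, transitionMatrix_apply]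
      split_ifs <;> ring
    constructor <;> linarith [abs_le.mp hk]
  have : Nonempty V := ⟨hconst.choose⟩
  have hsupα := ciSup_min_ciInf_le (b := 1) fun i ↦ (hrow i).imp fun _ ↦ And.left
  have hsupβ := ciSup_min_ciInf_le (b := 1) fun i ↦ (hrow i).imp fun _ ↦ And.right
  constructor <;> linarith

/-- For a simple connected graph `Γ` of order `n ≥ 2` with Randić
transition matrix `𝓡 = D⁻¹A`, every eigenvalue `λ ≠ 1` of `𝓡` satisfies
`-2 + max_i min{min_{k≠i} α_{ik}, 1} ≤ λ ≤ 2 - max_i min{min_{k≠i} β_{ik}, 1}`,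
where `α_{ik} = (1/d_k if k ∼ i else 0) + 2N(i,k)/max{d_i,d_k}` and
`β_{ik} = (1/d_k + 2/d_i if k ∼ i else 0) + 2N(i,k)/max{d_i,d_k}`. -/
theorem randic_eigenvalue_bounds (n : ℕ) (hn : 2 ≤ n)
    (G : SimpleGraph (Fin n)) [DecidableRel G.Adj]
    (hconn : G.Connected)
    (R : Matrix (Fin n) (Fin n) ℝ)
    (hR : ∀ i j, R i j = if G.Adj i j then 1 / (G.degree i : ℝ) else 0)
    (α β : Fin n → Fin n → ℝ)
    (hα : ∀ i k, k ≠ i → α i k =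
      (if G.Adj i k then 1 / (G.degree k : ℝ) else 0) +
        2 * ((G.neighborFinset i ∩ G.neighborFinset k).card : ℝ) /
          max (G.degree i : ℝ) (G.degree k : ℝ))
    (hβ : ∀ i k, k ≠ i → β i k =
      (if G.Adj i k then 1 / (G.degree k : ℝ) + 2 / (G.degree i : ℝ) else 0) +
        2 * ((G.neighborFinset i ∩ G.neighborFinset k).card : ℝ) /
          max (G.degree i : ℝ) (G.degree k : ℝ))
    (lam : ℝ) (hlam : lam ≠ 1)
    (hev : ∃ v : Fin n → ℝ, v ≠ 0 ∧ R.mulVec v = lam • v) :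
    -2 + (⨆ i : Fin n, min (⨅ k : {k : Fin n // k ≠ i}, α i k) 1) ≤ lam ∧
      lam ≤ 2 - (⨆ i : Fin n, min (⨅ k : {k : Fin n // k ≠ i}, β i k) 1) := by
  have : Nontrivial (Fin n) := Fin.nontrivial_iff_two_le.mpr hn
  have hdeg (i : Fin n) : 0 < G.degree i := hconn.preconnected.degree_pos_of_nontrivial i
  obtain ⟨v, hv0, hv⟩ := hev
  obtain rfl : R = transitionMatrix G := Matrix.ext hR
  exact randic_eigenvalue_bounds_general G hdeg α β hα hβ hv
    (exists_ne_of_mulVec_eq_smul (fun k ↦ sum_transitionMatrix (hdeg k)) hlam hv0 hv)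
end

section
/- Let Γ be a simple connected graph on n ≥ 2 vertices with Randić transition matrix 𝓡 = D⁻¹A, and let λ be any real eigenvalue of 𝓡 with λ ≠ 1. Then for EVERY vertex i of Γ, λ satisfies −2 + min_{k ≠ i} α_{ik} ≤ λ ≤ 2 − min_{k ≠ i} β_{ik}, where for k ≠ i: α_{ik} = 1/d_k + 2N(i,k)/max{d_i, d_k} if k ∼ i and α_{ik} = 2N(i,k)/max{d_i, d_k} if k ≁ i; β_{ik} = 1/d_k + 2/d_i + 2N(i,k)/max{d_i, d_k} if k ∼ i and β_{ik} = 2N(i,k)/max{d_i, d_k} if k ≁ i. -/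
/-!
For an eigenvector `v` of a matrix `P` with constant row sums and a fixed index `i`, the vector
`k ↦ v k - v i` is an eigenvector, for the same eigenvalue, of the deflated matrix
`P k j - P i j`. It vanishes at `i`, so Gershgorin's theorem may be applied with the index `i` left
out; the radii are then governed by the `ℓ¹` distances between the rows of `P`. For `P = D⁻¹A`
these distances count common neighbours, because `|a - b| = a + b - 2 * min a b` and two rows
overlap exactly on the common neighbours.
-/

open Finset Matrix

section ConstantRowSums

variable {ι K : Type*} [Fintype ι]

theorem exists_ne_of_mulVec_eq_smul_s11 [Ring K] [NoZeroDivisors K] {P : Matrix ι ι K} {r μ : K}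
    {v : ι → K} (hrow : ∀ k, ∑ j, P k j = r) (hμ : μ ≠ r) (hv : v ≠ 0)
    (hPv : P *ᵥ v = μ • v) : ∃ j k, v j ≠ v k := by
  by_contra! hconst
  refine hv (funext fun k ↦ ?_)
  have hk : r * v k = μ * v k := by
    calc r * v k = ∑ j, P k j * v j := by rw [← hrow k, sum_mul]; simp only [hconst _ k]
      _ = μ * v k := congrFun hPv k
  exact (mul_eq_mul_right_iff.mp hk).resolve_left hμ.symm

theorem sum_sub_row_mul_sub_eq [Ring K] {P : Matrix ι ι K} {μ : K} {v : ι → K} {i k : ι}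
    (hrow : ∑ j, P k j = ∑ j, P i j) (hPv : P *ᵥ v = μ • v) :
    ∑ j, (P k j - P i j) * (v j - v i) = μ * (v k - v i) := by
  have hPv' (l : ι) : ∑ j, P l j * v j = μ * v l := congrFun hPv l
  simp only [sub_mul, mul_sub, sum_sub_distrib, ← sum_mul, hPv', hrow]
  abel

theorem exists_ne_norm_sub_add_le_sum_norm_sub_row [NormedField K] {P : Matrix ι ι K} {r μ : K}
    {v : ι → K} (hrow : ∀ k, ∑ j, P k j = r) (hPv : P *ᵥ v = μ • v) (hv : ∃ j k, v j ≠ v k)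
    (i : ι) :
    ∃ k ≠ i, ‖μ - (P k k - P i k)‖ + ‖P k k - P i k‖ + ‖P k i - P i i‖ ≤
      ∑ j, ‖P k j - P i j‖ := by
  classical
  let Q : Matrix {k // k ≠ i} {k // k ≠ i} K := .of fun k j ↦ P k j - P i j
  let w : {k // k ≠ i} → K := fun k ↦ v k - v i
  have hQw : Q *ᵥ w = μ • w := by
    ext k
    have h := sum_sub_row_mul_sub_eq ((hrow k).trans (hrow i).symm) hPv
    rwa [Fintype.sum_eq_add_sum_subtype_ne _ i, sub_self, mul_zero, zero_add] at h
  have hw : w ≠ 0 := by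
    intro hw
    have hconst (j : ι) : v j = v i := by
      by_cases hj : j = i
      · rw [hj]
      · exact sub_eq_zero.mp (congrFun hw ⟨j, hj⟩)
    obtain ⟨j, k, hjk⟩ := hv
    exact hjk ((hconst j).trans (hconst k).symm)
  have hμ : Module.End.HasEigenvalue (toLin' Q) μ :=
    Module.End.hasEigenvalue_of_hasEigenvector
      ⟨Module.End.mem_eigenspace_iff.mpr ((toLin'_apply Q w).trans hQw), hw⟩
  obtain ⟨k, hk⟩ := eigenvalue_mem_ball hμ
  rw [mem_closedBall_iff_norm] at hk
  refine ⟨k, k.2, ?_⟩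
  calc
    ‖μ - Q k k‖ + ‖Q k k‖ + ‖P k i - P i i‖ ≤
        ∑ j ∈ univ.erase k, ‖Q k j‖ + ‖Q k k‖ + ‖P k i - P i i‖ := by
      gcongr
    _ = ∑ j, ‖P k j - P i j‖ := by
      rw [sum_erase_add _ _ (mem_univ k), add_comm, Fintype.sum_eq_add_sum_subtype_ne _ i]
      rfl

end ConstantRowSums

theorem sum_abs_sub_eq_sum_add_sum_sub_two_nsmul_sum_min {ι K : Type*} [AddCommGroup K]
    [LinearOrder K] [IsOrderedAddMonoid K] (s : Finset ι) (f g : ι → K) :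
    ∑ j ∈ s, |f j - g j| = ∑ j ∈ s, f j + ∑ j ∈ s, g j - 2 • ∑ j ∈ s, min (f j) (g j) := by
  rw [smul_sum, ← sum_add_distrib, ← sum_sub_distrib]
  refine sum_congr rfl fun j _ ↦ ?_
  rw [← max_sub_min_eq_abs', ← max_add_min, two_nsmul, add_sub_add_right_eq_sub]

section RandicMatrix

variable {V : Type*} [Fintype V] (G : SimpleGraph V) [DecidableRel G.Adj]

/-- The Randić transition matrix `𝓡 = D⁻¹A` of a graph, given by its entries. The row of an
isolated vertex is zero. -/
noncomputable def randicMatrix : Matrix V V ℝ :=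
  .of fun i j ↦ if G.Adj i j then 1 / (G.degree i : ℝ) else 0

theorem randicMatrix_apply (i j : V) :
    randicMatrix G i j = if G.Adj i j then 1 / (G.degree i : ℝ) else 0 := rfl

theorem randicMatrix_nonneg (i j : V) : 0 ≤ randicMatrix G i j := by
  rw [randicMatrix_apply]
  positivity

theorem randicMatrix_apply_self (i : V) : randicMatrix G i i = 0 := by
  simp [randicMatrix_apply]

variable {G} in
theorem sum_randicMatrix_row {i : V} (hi : ¬ G.IsIsolated i) : ∑ j, randicMatrix G i j = 1 := by
  have hdeg : (G.degree i : ℝ) ≠ 0 := by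
    exact_mod_cast (G.degree_eq_zero i).not.mpr hi
  simp only [randicMatrix_apply]
  rw [← sum_filter, sum_const, ← G.neighborFinset_eq_filter, G.card_neighborFinset_eq_degree,
    nsmul_eq_mul, mul_one_div_cancel hdeg]

variable [DecidableEq V]

theorem min_randicMatrix (i k j : V) :
    min (randicMatrix G i j) (randicMatrix G k j) =
      if j ∈ G.neighborFinset i ∩ G.neighborFinset k then
        1 / max (G.degree i : ℝ) (G.degree k : ℝ) else 0 := by
  by_cases hi : G.Adj i j <;> by_cases hk : G.Adj k j
  · have hdi : (0 : ℝ) < G.degree i := mod_cast hi.degree_pos_left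
    have hdk : (0 : ℝ) < G.degree k := mod_cast hk.degree_pos_left
    simp [randicMatrix_apply, hi, hk, antitoneOn_inv_pos.map_max (a := (G.degree i : ℝ)) hdi hdk]
  all_goals simp [randicMatrix_apply, hi, hk]

theorem sum_min_randicMatrix_row (i k : V) :
    ∑ j, min (randicMatrix G i j) (randicMatrix G k j) =
      #(G.neighborFinset i ∩ G.neighborFinset k) / max (G.degree i : ℝ) (G.degree k : ℝ) := by
  simp only [min_randicMatrix]
  rw [sum_ite_mem, univ_inter, sum_const, nsmul_eq_mul, mul_one_div]

variable {G}

theorem sum_abs_sub_randicMatrix_row {i k : V} (hi : ¬ G.IsIsolated i) (hk : ¬ G.IsIsolated k) :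
    ∑ j, |randicMatrix G k j - randicMatrix G i j| =
      2 - 2 * (#(G.neighborFinset i ∩ G.neighborFinset k) : ℝ) /
        max (G.degree i : ℝ) (G.degree k : ℝ) := by
  rw [sum_abs_sub_eq_sum_add_sum_sub_two_nsmul_sum_min, sum_randicMatrix_row hi,
    sum_randicMatrix_row hk, sum_min_randicMatrix_row, max_comm, inter_comm, nsmul_eq_mul,
    Nat.cast_ofNat, mul_div_assoc, one_add_one_eq_two]

theorem exists_ne_abs_add_randicMatrix_le (hG : ∀ i, ¬ G.IsIsolated i) {lam : ℝ} {v : V → ℝ}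
    (hev : randicMatrix G *ᵥ v = lam • v) (hv : ∃ j k, v j ≠ v k) (i : V) :
    ∃ k ≠ i, |lam + randicMatrix G i k| + randicMatrix G i k + randicMatrix G k i ≤
      2 - 2 * (#(G.neighborFinset i ∩ G.neighborFinset k) : ℝ) /
        max (G.degree i : ℝ) (G.degree k : ℝ) := by
  obtain ⟨k, hki, hk⟩ := exists_ne_norm_sub_add_le_sum_norm_sub_row
    (fun k ↦ sum_randicMatrix_row (hG k)) hev hv i
  refine ⟨k, hki, ?_⟩
  simpa only [Real.norm_eq_abs, randicMatrix_apply_self, zero_sub, sub_zero, sub_neg_eq_add,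
    abs_neg, abs_of_nonneg (randicMatrix_nonneg G _ _),
    sum_abs_sub_randicMatrix_row (hG i) (hG k)] using hk

end RandicMatrix

theorem randic_eigenvalue_bounds_each_vertex_general {V : Type*} [Fintype V] [DecidableEq V]
    {G : SimpleGraph V} [DecidableRel G.Adj] (hG : ∀ i, ¬ G.IsIsolated i) {α β : V → V → ℝ}
    (hα : ∀ i k, k ≠ i → α i k =
      (if G.Adj i k then 1 / (G.degree k : ℝ) else 0) +
        2 * (#(G.neighborFinset i ∩ G.neighborFinset k) : ℝ) /
          max (G.degree i : ℝ) (G.degree k : ℝ))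
    (hβ : ∀ i k, k ≠ i → β i k =
      (if G.Adj i k then 1 / (G.degree k : ℝ) + 2 / (G.degree i : ℝ) else 0) +
        2 * (#(G.neighborFinset i ∩ G.neighborFinset k) : ℝ) /
          max (G.degree i : ℝ) (G.degree k : ℝ))
    {lam : ℝ} {v : V → ℝ} (hev : randicMatrix G *ᵥ v = lam • v) (hv : ∃ j k, v j ≠ v k) (i : V) :
    -2 + (⨅ k : {k : V // k ≠ i}, α i k) ≤ lam ∧
      lam ≤ 2 - (⨅ k : {k : V // k ≠ i}, β i k) := by
  obtain ⟨k, hki, hk⟩ := exists_ne_abs_add_randicMatrix_le hG hev hv i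
  have iInf_le (γ : V → V → ℝ) : (⨅ k : {k : V // k ≠ i}, γ i k) ≤ γ i k :=
    ciInf_le (Set.finite_range fun k : {k : V // k ≠ i} ↦ γ i k).bddBelow ⟨k, hki⟩
  have hαk : α i k = randicMatrix G k i +
      2 * (#(G.neighborFinset i ∩ G.neighborFinset k) : ℝ) /
        max (G.degree i : ℝ) (G.degree k : ℝ) := by
    simp only [hα i k hki, randicMatrix_apply, G.adj_comm k i]
  have hβk : β i k = randicMatrix G k i + 2 * randicMatrix G i k +
      2 * (#(G.neighborFinset i ∩ G.neighborFinset k) : ℝ) /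
        max (G.degree i : ℝ) (G.degree k : ℝ) := by
    simp only [hβ i k hki, randicMatrix_apply, G.adj_comm k i]
    split_ifs <;> ring
  constructor
  · linarith [iInf_le α, neg_le_abs (lam + randicMatrix G i k)]
  · linarith [iInf_le β, le_abs_self (lam + randicMatrix G i k)]

/-- For a simple connected graph `Γ` on `n ≥ 2` vertices with Randić
transition matrix `𝓡 = D⁻¹A`, every real eigenvalue `λ ≠ 1` of `𝓡` satisfies, for
EVERY vertex `i`, `-2 + min_{k≠i} α_{ik} ≤ λ ≤ 2 - min_{k≠i} β_{ik}`, where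
`α_{ik} = (1/d_k if k ∼ i else 0) + 2N(i,k)/max{d_i,d_k}` and
`β_{ik} = (1/d_k + 2/d_i if k ∼ i else 0) + 2N(i,k)/max{d_i,d_k}`. -/
theorem randic_eigenvalue_bounds_each_vertex (n : ℕ) (hn : 2 ≤ n)
    (G : SimpleGraph (Fin n)) [DecidableRel G.Adj]
    (hconn : G.Connected)
    (R : Matrix (Fin n) (Fin n) ℝ)
    (hR : ∀ i j, R i j = if G.Adj i j then 1 / (G.degree i : ℝ) else 0)
    (α β : Fin n → Fin n → ℝ)
    (hα : ∀ i k, k ≠ i → α i k =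
      (if G.Adj i k then 1 / (G.degree k : ℝ) else 0) +
        2 * ((G.neighborFinset i ∩ G.neighborFinset k).card : ℝ) /
          max (G.degree i : ℝ) (G.degree k : ℝ))
    (hβ : ∀ i k, k ≠ i → β i k =
      (if G.Adj i k then 1 / (G.degree k : ℝ) + 2 / (G.degree i : ℝ) else 0) +
        2 * ((G.neighborFinset i ∩ G.neighborFinset k).card : ℝ) /
          max (G.degree i : ℝ) (G.degree k : ℝ))
    (lam : ℝ) (hlam : lam ≠ 1)
    (hev : ∃ v : Fin n → ℝ, v ≠ 0 ∧ R.mulVec v = lam • v) :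
    ∀ i : Fin n,
      -2 + (⨅ k : {k : Fin n // k ≠ i}, α i k) ≤ lam ∧
        lam ≤ 2 - (⨅ k : {k : Fin n // k ≠ i}, β i k) := by
  obtain rfl : R = randicMatrix G := Matrix.ext hR
  obtain ⟨v, hv, hev⟩ := hev
  have : Nontrivial (Fin n) := Fin.nontrivial_iff_two_le.mpr hn
  have hG (i : Fin n) : ¬ G.IsIsolated i := hconn.preconnected.not_isIsolated i
  exact randic_eigenvalue_bounds_each_vertex_general hG hα hβ hev
    (exists_ne_of_mulVec_eq_smul_s11 (fun k ↦ sum_randicMatrix_row (hG k)) hlam hv hev)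
end
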